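/- Let 0 < a, b < 1 with (1−a)(1−b) < 1/2, and let x, y : ℕ → ℕ be sequences with x(n) ≥ 1, y(n) ≥ 1, x(n)/n → a and y(n)/n → b as n → ∞. Write a_n := x(n)/n and b_n := y(n)/n. Then the ratio of S(n, x(n), y(n)) to the expression √((1−a_n)(1−b_n)) · (2 · a_n^{a_n} · b_n^{b_n} · (1−a_n)^{1−a_n} · (1−b_n)^{1−b_n})^{−n} / (4πn·√(a_n·b_n)·(1/2 − (1−a_n)(1−b_n))) tends to 1 as n → ∞ (all powers are real powers). -/

import Mathlib

/-!
Write `T k = C(k,x) C(k,y) / 2^(k+1)` for the summand. The exact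
recursion `T (k-1) = 2 (1 - x/k) (1 - y/k) T k` shows that, read backwards from the
(excluded) index `k = n`, the summands behave like a geometric progression of ratio
`r = 2 (1-a) (1-b) < 1`: each quotient `T (n-j) / T n` tends to `r^j`, and since the factor
`2 (1 - x/k) (1 - y/k)` increases with `k`, it is at most `ρ^j` for some fixed `ρ < 1` and large `n`.
Dominated convergence gives `S(n,x,y) / T n → r / (1 - r)` (`tendsto_sum_div_term`).

Stirling's formula gives `C(n,x) · √(2πn a_n (1-a_n)) (a_n^{a_n} (1-a_n)^{1-a_n})^n → 1`
(`tendsto_choose_mul_scale`), and the same for `y`; hence `T n` is known asymptotically. The claimed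
expression is exactly the product of these forms, with `r` replaced by `2 (1-a_n) (1-b_n)`.
-/

open Filter Real

/-- The partial sum `S(n,x,y) = ∑_{k=0}^{n−1} C(k,x) C(k,y) 2^{−(k+1)}`. -/
noncomputable def delannoyPartialSum (n x y : ℕ) : ℝ :=
  ∑ k ∈ Finset.range n, (Nat.choose k x : ℝ) * (Nat.choose k y : ℝ) / 2 ^ (k + 1)

open Topology Stirling

/-- The summand of `delannoyPartialSum`, at the index `k`. -/
noncomputable def delannoyTerm (x y k : ℕ) : ℝ :=
  (Nat.choose k x : ℝ) * (Nat.choose k y : ℝ) / 2 ^ (k + 1)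

lemma delannoyTerm_nonneg (x y k : ℕ) : 0 ≤ delannoyTerm x y k := by
  unfold delannoyTerm; positivity

lemma delannoyTerm_pos {x y k : ℕ} (hx : x ≤ k) (hy : y ≤ k) : 0 < delannoyTerm x y k := by
  have := Nat.choose_pos hx
  have := Nat.choose_pos hy
  unfold delannoyTerm; positivity

/-- No relation between `x` and `k` is needed: for `x > k + 1` both binomials vanish. -/
lemma choose_pred_eq (x k : ℕ) :
    (Nat.choose k x : ℝ) = (1 - (x : ℝ) / ((k + 1 : ℕ) : ℝ)) * (Nat.choose (k + 1) x : ℝ) := by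
  have hk : ((k + 1 : ℕ) : ℝ) ≠ 0 := by positivity
  rcases le_or_gt x (k + 1) with h | h
  · have h1 := Nat.choose_mul_succ_eq k x
    have h2 : (k.choose x : ℝ) * ((k + 1 : ℕ) : ℝ)
        = ((k + 1).choose x : ℝ) * (((k + 1 : ℕ) : ℝ) - x) := by
      rw [← Nat.cast_sub h]; exact_mod_cast h1
    field_simp
    linarith
  · rw [Nat.choose_eq_zero_of_lt h, Nat.choose_eq_zero_of_lt (by omega)]; simp

lemma delannoyTerm_pred (x y k : ℕ) :
    delannoyTerm x y k = 2 * (1 - (x : ℝ) / ((k + 1 : ℕ) : ℝ)) * (1 - (y : ℝ) / ((k + 1 : ℕ) : ℝ))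
      * delannoyTerm x y (k + 1) := by
  unfold delannoyTerm
  rw [choose_pred_eq x k, choose_pred_eq y k]
  field_simp
  ring

lemma delannoyTerm_pred_le {x y n k : ℕ} (hx : x ≤ n) (hy : y ≤ n) (hk : k + 1 ≤ n) :
    delannoyTerm x y k ≤ 2 * (1 - (x : ℝ) / n) * (1 - (y : ℝ) / n) * delannoyTerm x y (k + 1) := by
  have hn : (0 : ℝ) < n := by exact_mod_cast (by omega : 0 < n)
  have hp : 0 ≤ 1 - (x : ℝ) / n := by
    rw [sub_nonneg, div_le_one hn]; exact_mod_cast hx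
  have hq : 0 ≤ 1 - (y : ℝ) / n := by
    rw [sub_nonneg, div_le_one hn]; exact_mod_cast hy
  by_cases h : x ≤ k + 1 ∧ y ≤ k + 1
  · rw [delannoyTerm_pred x y k]
    have hk0 : (0 : ℝ) < ((k + 1 : ℕ) : ℝ) := by positivity
    have hkn : ((k + 1 : ℕ) : ℝ) ≤ n := by exact_mod_cast hk
    have h2 : 0 ≤ 1 - (y : ℝ) / ((k + 1 : ℕ) : ℝ) := by
      rw [sub_nonneg, div_le_one hk0]; exact_mod_cast h.2
    have := delannoyTerm_nonneg x y (k + 1)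
    gcongr
  · have h0 : delannoyTerm x y k = 0 := by
      unfold delannoyTerm
      rw [not_and_or, not_le, not_le] at h
      rcases h with h | h
      · rw [Nat.choose_eq_zero_of_lt (by omega : k < x)]; simp
      · rw [Nat.choose_eq_zero_of_lt (by omega : k < y)]; simp
    rw [h0]
    have := delannoyTerm_nonneg x y (k + 1)
    positivity

lemma delannoyTerm_sub_le {x y n : ℕ} (hx : x ≤ n) (hy : y ≤ n) {ρ : ℝ} (hρ0 : 0 ≤ ρ)
    (hρ : 2 * (1 - (x : ℝ) / n) * (1 - (y : ℝ) / n) ≤ ρ) (j : ℕ) (hj : j ≤ n) :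
    delannoyTerm x y (n - j) ≤ ρ ^ j * delannoyTerm x y n := by
  induction j with
  | zero => simp
  | succ j ih =>
    have h1 := delannoyTerm_pred_le (k := n - (j + 1)) hx hy (by omega)
    have e : n - (j + 1) + 1 = n - j := by omega
    rw [e] at h1
    have h2 := ih (by omega)
    calc _ ≤ _ := h1
      _ ≤ ρ * (ρ ^ j * delannoyTerm x y n) := by
        have := delannoyTerm_nonneg x y (n - j)
        gcongr
      _ = _ := by ring

lemma tendsto_div_sub {a : ℝ} {x : ℕ → ℕ}
    (hx : Tendsto (fun n => (x n : ℝ) / n) atTop (𝓝 a)) (j : ℕ) :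
    Tendsto (fun n => (x n : ℝ) / ((n - j : ℕ) : ℝ)) atTop (𝓝 a) := by
  have h1 : Tendsto (fun n : ℕ => (n : ℝ) / ((n - j : ℕ) : ℝ)) atTop (𝓝 1) := by
    rw [← tendsto_add_atTop_iff_nat j]
    have h := (tendsto_const_div_atTop_nhds_zero_nat (j : ℝ)).const_add 1
    rw [add_zero] at h
    refine h.congr' ?_
    filter_upwards [eventually_gt_atTop 0] with n hn
    have : (n : ℝ) ≠ 0 := by positivity
    simp only [Nat.add_sub_cancel]
    push_cast
    field_simp
  have h := hx.mul h1
  rw [mul_one] at h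
  refine h.congr' ?_
  filter_upwards [eventually_gt_atTop 0] with n hn
  have : (n : ℝ) ≠ 0 := by positivity
  field_simp

lemma eventually_lt_of_tendsto_div {a : ℝ} (ha1 : a < 1) {x : ℕ → ℕ}
    (hx : Tendsto (fun n => (x n : ℝ) / n) atTop (𝓝 a)) : ∀ᶠ n in atTop, x n < n := by
  filter_upwards [hx.eventually_lt_const ha1, eventually_gt_atTop 0] with n h hn
  have : (0 : ℝ) < n := by positivity
  rw [div_lt_one this] at h
  exact_mod_cast h

lemma tendsto_term_ratio {a b : ℝ} (ha1 : a < 1) (hb1 : b < 1) {x y : ℕ → ℕ}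
    (hx : Tendsto (fun n => (x n : ℝ) / n) atTop (𝓝 a))
    (hy : Tendsto (fun n => (y n : ℝ) / n) atTop (𝓝 b)) (j : ℕ) :
    Tendsto (fun n => delannoyTerm (x n) (y n) (n - j) / delannoyTerm (x n) (y n) n) atTop
      (𝓝 ((2 * (1 - a) * (1 - b)) ^ j)) := by
  induction j with
  | zero =>
    rw [pow_zero]
    refine tendsto_const_nhds.congr' ?_
    filter_upwards [eventually_lt_of_tendsto_div ha1 hx, eventually_lt_of_tendsto_div hb1 hy]
      with n h1 h2
    exact (div_self (delannoyTerm_pos h1.le h2.le).ne').symm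
  | succ j ih =>
    have h := (((tendsto_div_sub hx j).const_sub 1).const_mul 2).mul
      ((tendsto_div_sub hy j).const_sub 1) |>.mul ih
    rw [pow_succ']
    refine h.congr' ?_
    filter_upwards [eventually_gt_atTop j] with n hn
    have e : n - (j + 1) + 1 = n - j := by omega
    rw [delannoyTerm_pred _ _ (n - (j + 1)), e]
    ring

/-- The last summands dominate: relative to the first excluded term, the partial sum converges
to the sum of a geometric series of ratio `2 (1 - a) (1 - b)`, without its leading `1`. -/
lemma tendsto_sum_div_term {a b : ℝ} (ha1 : a < 1) (hb1 : b < 1)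
    (hab : (1 - a) * (1 - b) < 1 / 2) {x y : ℕ → ℕ}
    (hx : Tendsto (fun n => (x n : ℝ) / n) atTop (𝓝 a))
    (hy : Tendsto (fun n => (y n : ℝ) / n) atTop (𝓝 b)) :
    Tendsto (fun n => delannoyPartialSum n (x n) (y n) / delannoyTerm (x n) (y n) n) atTop
      (𝓝 ((1 - a) * (1 - b) / (1 / 2 - (1 - a) * (1 - b)))) := by
  set r := 2 * (1 - a) * (1 - b) with hr
  have hpq : 0 < (1 - a) * (1 - b) := mul_pos (by linarith) (by linarith)
  have hr0 : 0 < r := by rw [hr]; linarith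
  have hr1 : r < 1 := by rw [hr]; linarith
  obtain ⟨ρ, hrρ, hρ1⟩ := exists_between hr1
  have hρ0 : 0 ≤ ρ := by linarith
  have hrn : Tendsto (fun n => 2 * (1 - (x n : ℝ) / n) * (1 - (y n : ℝ) / n)) atTop (𝓝 r) :=
    ((hx.const_sub 1).const_mul 2).mul (hy.const_sub 1)
  let f : ℕ → ℕ → ℝ := fun n j =>
    if j < n then delannoyTerm (x n) (y n) (n - (j + 1)) / delannoyTerm (x n) (y n) n else 0
  have hlim : Tendsto (fun n => ∑' j, f n j) atTop (𝓝 (∑' j, r ^ (j + 1))) := by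
    refine tendsto_tsum_of_dominated_convergence (bound := fun j => ρ ^ (j + 1)) ?_ ?_ ?_
    · exact (summable_nat_add_iff 1).2 (summable_geometric_of_lt_one hρ0 hρ1)
    · intro j
      refine (tendsto_term_ratio ha1 hb1 hx hy (j + 1)).congr' ?_
      filter_upwards [eventually_gt_atTop j] with n hn
      simp [f, hn]
    · filter_upwards [eventually_lt_of_tendsto_div ha1 hx, eventually_lt_of_tendsto_div hb1 hy,
        hrn.eventually_lt_const hrρ] with n h1 h2 h3 j
      have hT := delannoyTerm_pos h1.le h2.le
      simp only [f]
      split_ifs with hj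
      · rw [Real.norm_of_nonneg (div_nonneg (delannoyTerm_nonneg _ _ _) hT.le), div_le_iff₀ hT]
        exact delannoyTerm_sub_le h1.le h2.le hρ0 h3.le (j + 1) hj
      · rw [norm_zero]; positivity
  have hsum : ∑' j : ℕ, r ^ (j + 1) = (1 - a) * (1 - b) / (1 / 2 - (1 - a) * (1 - b)) := by
    simp_rw [pow_succ]
    rw [tsum_mul_right, tsum_geometric_of_lt_one hr0.le hr1]
    have h1 : 1 - r ≠ 0 := by linarith
    have h2 : 1 / 2 - (1 - a) * (1 - b) ≠ 0 := by linarith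
    rw [inv_mul_eq_div, div_eq_div_iff h1 h2, hr]
    ring
  rw [hsum] at hlim
  refine hlim.congr fun n => ?_
  rw [tsum_eq_sum (s := Finset.range n) (fun j hj => by simp [f] at hj ⊢; omega)]
  unfold delannoyPartialSum
  rw [← Finset.sum_range_reflect (fun k => _ / _), Finset.sum_div]
  refine Finset.sum_congr rfl fun j hj => ?_
  rw [Finset.mem_range] at hj
  have e : n - 1 - j = n - (j + 1) := by omega
  simp only [f, if_pos hj, e, delannoyTerm]

/-- The reciprocal of the Stirling approximation of `C(n, t n)`. -/
noncomputable def chooseScale (n : ℕ) (t : ℝ) : ℝ :=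
  √(2 * π * n * (t * (1 - t))) * (t ^ t * (1 - t) ^ (1 - t)) ^ (n : ℝ)

lemma factorial_eq_stirlingSeq {m : ℕ} (hm : 0 < m) :
    (m.factorial : ℝ) = stirlingSeq m * (√(2 * m) * (m / exp 1) ^ m) := by
  unfold stirlingSeq
  have : (0 : ℝ) < m := by exact_mod_cast hm
  field_simp

/-- With the factorials expressed through `stirlingSeq`, the powers of `e` and the elementary
factors cancel exactly, so that only the convergent factors remain. -/
lemma choose_mul_chooseScale {n x : ℕ} (hx0 : 0 < x) (hxn : x < n) :
    (n.choose x : ℝ) * chooseScale n ((x : ℝ) / n)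
      = √π * stirlingSeq n / (stirlingSeq x * stirlingSeq (n - x)) := by
  obtain ⟨z, rfl⟩ : ∃ z, n = x + z := ⟨n - x, by omega⟩
  have hz : 0 < z := by omega
  have hX : (0 : ℝ) < x := by exact_mod_cast hx0
  have hZ : (0 : ℝ) < z := by exact_mod_cast hz
  have hN : (0 : ℝ) < ((x + z : ℕ) : ℝ) := by positivity
  have hs : ∀ m : ℕ, 0 < m → 0 < stirlingSeq m := fun m hm => by
    obtain ⟨k, rfl⟩ := Nat.exists_eq_succ_of_ne_zero hm.ne'
    exact stirlingSeq'_pos k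
  have h1t : 1 - (x : ℝ) / ((x + z : ℕ) : ℝ) = z / ((x + z : ℕ) : ℝ) := by
    field_simp; push_cast; ring
  have hpow : ∀ w : ℕ, 0 < w → (((w : ℝ) / ((x + z : ℕ) : ℝ)) ^ ((w : ℝ) / ((x + z : ℕ) : ℝ)))
      ^ (((x + z : ℕ) : ℝ)) = ((w : ℝ) / ((x + z : ℕ) : ℝ)) ^ w := fun w hw => by
    rw [← Real.rpow_mul (by positivity), div_mul_cancel₀ _ hN.ne', Real.rpow_natCast]
  have hsq : √(2 * π * ((x + z : ℕ) : ℝ) * ((x : ℝ) / ((x + z : ℕ) : ℝ) * (z / ((x + z : ℕ) : ℝ))))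
      * √(2 * ((x + z : ℕ) : ℝ)) = √π * (√(2 * x) * √(2 * z)) := by
    rw [← Real.sqrt_mul (by positivity), ← Real.sqrt_mul (by positivity),
      ← Real.sqrt_mul (by positivity)]
    congr 1
    field_simp
  rw [Nat.add_sub_cancel_left, chooseScale, h1t, Real.mul_rpow (by positivity) (by positivity),
    hpow x hx0, hpow z hz, Nat.cast_choose ℝ (by omega : x ≤ x + z), Nat.add_sub_cancel_left,
    factorial_eq_stirlingSeq hx0, factorial_eq_stirlingSeq hz,
    factorial_eq_stirlingSeq (by omega : 0 < x + z)]
  have := hs x hx0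
  have := hs z hz
  rw [div_mul_eq_mul_div, div_eq_div_iff (by positivity) (by positivity)]
  generalize ((x + z : ℕ) : ℝ) = N at *
  generalize √(2 * π * N * ((x : ℝ) / N * (z / N))) = u at *
  simp only [div_pow, pow_add]
  have : (exp 1) ≠ 0 := (exp_pos 1).ne'
  field_simp
  linear_combination stirlingSeq (x + z) * hsq

lemma tendsto_choose_mul_scale {a : ℝ} (ha0 : 0 < a) (ha1 : a < 1) {x : ℕ → ℕ}
    (hx1 : ∀ n, 1 ≤ x n)
    (hx : Tendsto (fun n => (x n : ℝ) / n) atTop (𝓝 a)) :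
    Tendsto (fun n => (n.choose (x n) : ℝ) * chooseScale n ((x n : ℝ) / n)) atTop (𝓝 1) := by
  have hxtop : Tendsto x atTop atTop := by
    rw [← tendsto_natCast_atTop_iff (R := ℝ)]
    refine (hx.pos_mul_atTop ha0 tendsto_natCast_atTop_atTop).congr' ?_
    filter_upwards [eventually_gt_atTop 0] with n hn
    have : (n : ℝ) ≠ 0 := by positivity
    field_simp
  have hztop : Tendsto (fun n => n - x n) atTop atTop := by
    rw [← tendsto_natCast_atTop_iff (R := ℝ)]
    refine ((hx.const_sub 1).pos_mul_atTop (by linarith) tendsto_natCast_atTop_atTop).congr' ?_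
    filter_upwards [eventually_gt_atTop 0, eventually_lt_of_tendsto_div ha1 hx] with n hn h
    have : (n : ℝ) ≠ 0 := by positivity
    rw [Nat.cast_sub h.le]
    field_simp
  have hs := tendsto_stirlingSeq_sqrt_pi
  have hpi : √π ≠ 0 := by positivity
  have h := (hs.const_mul √π).div ((hs.comp hxtop).mul (hs.comp hztop)) (mul_ne_zero hpi hpi)
  rw [div_self (mul_ne_zero hpi hpi)] at h
  refine h.congr' ?_
  filter_upwards [eventually_lt_of_tendsto_div ha1 hx] with n hn
  exact (choose_mul_chooseScale (hx1 n) hn).symm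

/-- The second branch of Lemma 4.1(b): if `x(n)/n → a`, `y(n)/n → b` with `0 < a, b < 1` and
`(1−a)(1−b) < 1/2`, then, writing `a_n = x(n)/n`, `b_n = y(n)/n`, `S(n, x(n), y(n))` is
asymptotically
`√((1−a_n)(1−b_n)) (2 a_n^{a_n} b_n^{b_n} (1−a_n)^{1−a_n} (1−b_n)^{1−b_n})^{−n}
  / (4πn √(a_n b_n) (1/2 − (1−a_n)(1−b_n)))`. -/
theorem delannoyPartialSum_asymptotics_inside (a b : ℝ)
    (ha0 : 0 < a) (ha1 : a < 1) (hb0 : 0 < b) (hb1 : b < 1)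
    (hab : (1 - a) * (1 - b) < 1 / 2)
    (x y : ℕ → ℕ) (hx1 : ∀ n, 1 ≤ x n) (hy1 : ∀ n, 1 ≤ y n)
    (hx : Tendsto (fun n => (x n : ℝ) / n) atTop (nhds a))
    (hy : Tendsto (fun n => (y n : ℝ) / n) atTop (nhds b)) :
    Tendsto (fun n : ℕ =>
        delannoyPartialSum n (x n) (y n) /
          (Real.sqrt ((1 - (x n : ℝ) / n) * (1 - (y n : ℝ) / n)) *
            (2 * ((x n : ℝ) / n) ^ ((x n : ℝ) / n) * ((y n : ℝ) / n) ^ ((y n : ℝ) / n) *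
              (1 - (x n : ℝ) / n) ^ (1 - (x n : ℝ) / n) *
              (1 - (y n : ℝ) / n) ^ (1 - (y n : ℝ) / n)) ^ (-(n : ℝ)) /
            (4 * Real.pi * n * Real.sqrt ((x n : ℝ) / n * ((y n : ℝ) / n)) *
              (1 / 2 - (1 - (x n : ℝ) / n) * (1 - (y n : ℝ) / n)))))
      atTop (nhds 1) := by
  have h1 := tendsto_sum_div_term ha1 hb1 hab hx hy
  have h2 := tendsto_choose_mul_scale ha0 ha1 hx1 hx
  have h3 := tendsto_choose_mul_scale hb0 hb1 hy1 hy
  have hpq : Tendsto (fun n => (1 - (x n : ℝ) / n) * (1 - (y n : ℝ) / n)) atTop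
      (𝓝 ((1 - a) * (1 - b))) := (hx.const_sub 1).mul (hy.const_sub 1)
  have hpq0 : (1 - a) * (1 - b) ≠ 0 := (mul_pos (by linarith) (by linarith)).ne'
  have hd0 : 1 / 2 - (1 - a) * (1 - b) ≠ 0 := by linarith
  have h4 := (((hpq.const_sub (1 / 2)).div hpq hpq0).mul h1).mul (h2.mul h3)
  have e : (1 / 2 - (1 - a) * (1 - b)) / ((1 - a) * (1 - b))
      * ((1 - a) * (1 - b) / (1 / 2 - (1 - a) * (1 - b))) * (1 * 1) = 1 := by
    rw [div_mul_div_cancel₀ hpq0, div_self hd0, one_mul, one_mul]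
  rw [e] at h4
  refine h4.congr' ?_
  filter_upwards [eventually_lt_of_tendsto_div ha1 hx, eventually_lt_of_tendsto_div hb1 hy,
    hpq.eventually_lt_const hab] with n hxn hyn hlt
  have hn : (0 : ℝ) < n := by exact_mod_cast (by omega : 0 < n)
  have hs0 : 0 < (x n : ℝ) / n := div_pos (by exact_mod_cast hx1 n) hn
  have ht0 : 0 < (y n : ℝ) / n := div_pos (by exact_mod_cast hy1 n) hn
  have hs1 : 0 < 1 - (x n : ℝ) / n := by
    rw [sub_pos, div_lt_one hn]; exact_mod_cast hxn
  have ht1 : 0 < 1 - (y n : ℝ) / n := by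
    rw [sub_pos, div_lt_one hn]; exact_mod_cast hyn
  have hcx : (0 : ℝ) < n.choose (x n) := by exact_mod_cast Nat.choose_pos hxn.le
  have hcy : (0 : ℝ) < n.choose (y n) := by exact_mod_cast Nat.choose_pos hyn.le
  simp only [Pi.div_apply, chooseScale, delannoyTerm]
  generalize (x n : ℝ) / n = s at *
  generalize (y n : ℝ) / n = t at *
  generalize (n.choose (x n) : ℝ) = cx at *
  generalize (n.choose (y n) : ℝ) = cy at *
  generalize delannoyPartialSum n (x n) (y n) = S
  have hd : 0 < 1 / 2 - (1 - s) * (1 - t) := by linarith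
  have hP : (2 * s ^ s * t ^ t * (1 - s) ^ (1 - s) * (1 - t) ^ (1 - t)) ^ (-(n : ℝ))
      = (2 ^ n * ((s ^ s * (1 - s) ^ (1 - s)) ^ (n : ℝ) * (t ^ t * (1 - t) ^ (1 - t)) ^ (n : ℝ)))⁻¹ := by
    rw [Real.rpow_neg (by positivity), ← Real.rpow_natCast 2 n,
      ← Real.mul_rpow (by positivity) (by positivity),
      ← Real.mul_rpow (by positivity) (by positivity)]
    congr 2
    ring
  have hR : √(2 * π * n * (s * (1 - s))) * √(2 * π * n * (t * (1 - t)))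
      = 2 * π * n * (√(s * t) * √((1 - s) * (1 - t))) := by
    rw [← Real.sqrt_mul (by positivity), ← Real.sqrt_mul (by positivity),
      ← Real.sqrt_sq (by positivity : 0 ≤ 2 * π * n), ← Real.sqrt_mul (by positivity),
      Real.sqrt_sq (by positivity : 0 ≤ 2 * π * n)]
    congr 1
    ring
  have hA : 0 < (s ^ s * (1 - s) ^ (1 - s)) ^ (n : ℝ) := by positivity
  have hB : 0 < (t ^ t * (1 - t) ^ (1 - t)) ^ (n : ℝ) := by positivity
  rw [hP]
  generalize (s ^ s * (1 - s) ^ (1 - s)) ^ (n : ℝ) = A at *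
  generalize (t ^ t * (1 - t) ^ (1 - t)) ^ (n : ℝ) = B at *
  have hq2 : √((1 - s) * (1 - t)) * √((1 - s) * (1 - t)) = (1 - s) * (1 - t) :=
    Real.mul_self_sqrt (by positivity)
  have hq : 0 < √((1 - s) * (1 - t)) := by positivity
  have hst : 0 < √(s * t) := by positivity
  have eq1 : cx * (√(2 * π * n * (s * (1 - s))) * A) * (cy * (√(2 * π * n * (t * (1 - t))) * B))
      = cx * cy * A * B * (2 * π * n * (√(s * t) * √((1 - s) * (1 - t)))) := by
    rw [← hR]; ring
  rw [eq1]
  generalize √((1 - s) * (1 - t)) = Q at *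
  generalize √(s * t) = R at *
  rw [← hq2] at hd ⊢
  generalize hD : 1 / 2 - Q * Q = D at *
  field_simp
  ring
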